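/- Assume f satisfies (f_reg), (f_eq), (f_0), and in the case R1 = 0 assume additionally either (f_subl) or (f_subc). Then there exists d* > 1 such that for every d ≥ d* and every solution u of the Cauchy problem with datum d on [R1,R2], one has u'(r) < 0 for every r ∈ (R1,R2]. In particular, every radial solution u of the Neumann problem on [R1,R2] satisfies u(R1) < d*. -/

import Mathlib

/-!
Suppose that a solution with large datum `d` fails to decrease, and let `z` be the first critical
point after `R1`. While `u > 1` the flux `r ^ (N - 1) φ_p(u')` decreases, so `0 ≤ u z ≤ 1`, and `u`
has to fall from `d` to at most `1` on `[R1, z]`. Since `f` is bounded below, the flux, which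
vanishes at `z`, is bounded below on `[R1, z]` independently of `d`. By the mean value theorem `u`
can then only be large near the origin: a radius at which `u` is still comparable to `d` has to
tend to `0` as `d → ∞`.

If `R1 > 0` this is absurd at the radius `R1` itself. If `R1 = 0` and `f` is sublinear, integrating
the equation from `0` shows that `u` stays above `d / 2` up to a radius independent of `d`. If
`R1 = 0` and `f` is subcritical, the functional `r ^ N E(r) + (N / p*) r ^ (N - 1) φ_p(u') u`, with
`E` the energy, vanishes at `0`, has derivative bounded below, and at `z` equals `z ^ N F(u z)`;
so it is bounded above on `[0, z]` independently of `d`. At the radius where `u = η d`, however, it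
is at least a power of `d` with positive exponent.
-/

open Real Set Filter Topology

noncomputable def phip (p s : ℝ) : ℝ := |s| ^ (p - 2) * s

def Freg (f : ℝ → ℝ) : Prop :=
  ContinuousOn f (Ici 0) ∧ ContDiffOn ℝ 1 f (Ioi 0)

def Feq (f : ℝ → ℝ) : Prop :=
  f 0 = 0 ∧ f 1 = 0 ∧ (∀ s : ℝ, 0 < s → s < 1 → f s < 0) ∧ (∀ s : ℝ, 1 < s → 0 < f s)

def Fzero (p : ℝ) (f : ℝ → ℝ) : Prop :=
  ∃ c : ℝ, ∀ᶠ s in 𝓝[>] (0:ℝ), c ≤ f s / s ^ (p - 1)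

noncomputable def pstar (p : ℝ) (N : ℕ) : EReal :=
  if p < (N:ℝ) then (((N:ℝ) * p / ((N:ℝ) - p) : ℝ) : EReal) else ⊤

noncomputable def fstar (f : ℝ → ℝ) (s : ℝ) : ℝ := sSup (f '' Icc 1 s)

noncomputable def Fint (f : ℝ → ℝ) (s : ℝ) : ℝ := ∫ σ in (1:ℝ)..s, f σ

def Fsubl (p : ℝ) (f : ℝ → ℝ) : Prop :=
  ∃ M : ℝ, 0 < M ∧ ∀ ε > 0, ∀ᶠ s in atTop, f s / s ^ (p - 1) ≤ M + ε

def FsubcWith (p : ℝ) (N : ℕ) (f : ℝ → ℝ) (η : ℝ) : Prop :=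
  (∀ c : ℝ, ∃ᶠ s in atTop, c < f s / s ^ (p - 1)) ∧
  0 < η ∧ η < 1 ∧
  ∃ L : ℝ, (L : EReal) < pstar p N ∧
    ∀ᶠ s in atTop, fstar f s * s / Fint f (η * s) ≤ L

def Fsubc (p : ℝ) (N : ℕ) (f : ℝ → ℝ) : Prop := ∃ η : ℝ, FsubcWith p N f η

/-- A radial solution of the Neumann problem on `[R1,R2]`. -/
def NeumannSol (p : ℝ) (N : ℕ) (R1 R2 : ℝ) (f u : ℝ → ℝ) : Prop :=
  (∀ x ∈ Icc R1 R2, DifferentiableAt ℝ u x) ∧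
  ContinuousOn (deriv u) (Icc R1 R2) ∧
  (∀ x ∈ Icc R1 R2, 0 < u x) ∧
  deriv u R1 = 0 ∧ deriv u R2 = 0 ∧
  ContinuousOn (fun x => x ^ (N - 1) * phip p (deriv u x)) (Icc R1 R2) ∧
  ∀ x ∈ Ioc R1 R2,
    HasDerivAt (fun t => t ^ (N - 1) * phip p (deriv u t)) (-(x ^ (N - 1)) * f (u x)) x

noncomputable def fhat (f : ℝ → ℝ) (s : ℝ) : ℝ := if 0 ≤ s then f s else 0

noncomputable def Fhat (f : ℝ → ℝ) (s : ℝ) : ℝ := ∫ σ in (1:ℝ)..s, fhat f σ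

/-- A solution of the Cauchy problem with datum `d`, for the nonlinearity `g`. -/
def CauchySol (p : ℝ) (N : ℕ) (R1 R2 : ℝ) (g u : ℝ → ℝ) (d : ℝ) : Prop :=
  (∀ x ∈ Icc R1 R2, DifferentiableAt ℝ u x) ∧
  ContinuousOn (deriv u) (Icc R1 R2) ∧
  u R1 = d ∧ deriv u R1 = 0 ∧
  ContinuousOn (fun x => x ^ (N - 1) * phip p (deriv u x)) (Icc R1 R2) ∧
  ∀ x ∈ Ioc R1 R2,
    HasDerivAt (fun t => t ^ (N - 1) * phip p (deriv u t)) (-(x ^ (N - 1)) * g (u x)) x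

noncomputable def rOne (R1 R2 : ℝ) (u : ℝ → ℝ) : ℝ :=
  sSup {x | x ∈ Icc R1 R2 ∧ ∀ s ∈ Ico R1 x, 0 < u s}

noncomputable def rZero (R2 η d : ℝ) (u : ℝ → ℝ) : ℝ :=
  sSup {x | x ∈ Icc 0 R2 ∧ ∀ s ∈ Ico 0 x, η * d < u s}

noncomputable def energy (p : ℝ) (f u : ℝ → ℝ) (x : ℝ) : ℝ :=
  |deriv u x| ^ p / (p / (p - 1)) + Fhat f (u x)

def NonConstOn (R1 R2 : ℝ) (u : ℝ → ℝ) : Prop :=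
  ∃ x ∈ Icc R1 R2, ∃ x' ∈ Icc R1 R2, u x ≠ u x'

def DistinctOn (R1 R2 : ℝ) (u v : ℝ → ℝ) : Prop :=
  ∃ x ∈ Icc R1 R2, u x ≠ v x

noncomputable def nOverPstar (p : ℝ) (N : ℕ) : ℝ :=
  if p < (N:ℝ) then ((N:ℝ) - p) / p else 0

section PLaplacian

variable {p q s : ℝ}

lemma phip_neg_iff : phip p s < 0 ↔ s < 0 := by
  refine ⟨fun h => ?_, fun hs =>
    mul_neg_of_pos_of_neg (rpow_pos_of_pos (abs_pos.2 hs.ne) _) hs⟩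
  by_contra! hs
  exact h.not_ge (mul_nonneg (rpow_nonneg (abs_nonneg s) _) hs)

lemma abs_phip (hp : p ≠ 1) : |phip p s| = |s| ^ (p - 1) := by
  have hp' : p - 2 + 1 ≠ 0 := fun h => hp (by linarith)
  rw [phip, abs_mul, abs_of_nonneg (rpow_nonneg (abs_nonneg s) _),
    ← rpow_add_one' (abs_nonneg s) hp']
  ring_nf

lemma phip_mul_self (hp : p ≠ 0) : phip p s * s = |s| ^ p := by
  have hp' : p - 2 + (2 : ℕ) ≠ 0 := by simpa using hp
  rw [phip, mul_assoc, ← sq, ← sq_abs, ← rpow_add_natCast' (abs_nonneg s) hp']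
  norm_num

lemma abs_phip_rpow (h : p.HolderConjugate q) : |phip p s| ^ q = |s| ^ p := by
  rw [abs_phip h.lt.ne', ← rpow_mul (abs_nonneg s), h.sub_one_mul_conj]

lemma phip_phip (h : p.HolderConjugate q) : phip q (phip p s) = s := by
  rcases eq_or_ne s 0 with rfl | hs
  · simp [phip]
  have hexp : (p - 1) * (q - 2) + (p - 2) = 0 := by linarith [h.mul_eq_add]
  rw [phip, abs_phip h.lt.ne', phip, ← mul_assoc, ← rpow_mul (abs_nonneg s),
    ← rpow_add (abs_pos.2 hs), hexp, rpow_zero, one_mul]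

/- `|s| ^ p = |φ_p(s)| ^ q`, so only `φ_p ∘ y` has to be differentiable, not `y` itself. -/
lemma hasDerivAt_abs_rpow_of_phip (h : p.HolderConjugate q) {y : ℝ → ℝ} {w x : ℝ}
    (hy : HasDerivAt (fun t => phip p (y t)) w x) :
    HasDerivAt (fun t => |y t| ^ p) (q * y x * w) x := by
  have hcomp := (hasDerivAt_abs_rpow (phip p (y x)) h.symm.lt).comp x hy
  rw [mul_assoc q, ← phip, phip_phip h] at hcomp
  exact hcomp.congr_of_eventuallyEq (Eventually.of_forall fun t => (abs_phip_rpow h).symm)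

end PLaplacian

section RealAnalysis

lemma exists_first_zero {h : ℝ → ℝ} {a b : ℝ} (hab : a ≤ b) (hc : ContinuousOn h (Icc a b))
    (ha : h a < 0) (hb : 0 ≤ h b) :
    ∃ x ∈ Ioc a b, h x = 0 ∧ ∀ z ∈ Ico a x, h z < 0 := by
  have hzeros : IsCompact (Icc a b ∩ h ⁻¹' {0}) := isCompact_Icc.of_isClosed_subset
    (hc.preimage_isClosed_of_isClosed isClosed_Icc isClosed_singleton) inter_subset_left
  obtain ⟨y, hy, hy0⟩ := intermediate_value_Icc hab hc ⟨ha.le, hb⟩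
  obtain ⟨x, ⟨hx, hx0⟩, hmin⟩ := hzeros.exists_isLeast ⟨y, hy, hy0⟩
  have hax : a < x := hx.1.lt_of_ne fun h' => ha.ne (h' ▸ hx0)
  refine ⟨x, ⟨hax, hx.2⟩, hx0, fun z hz => ?_⟩
  by_contra! hz0
  have hzb : z ≤ b := hz.2.le.trans hx.2
  obtain ⟨y, hy, hy0⟩ := intermediate_value_Icc hz.1
    (hc.mono (Icc_subset_Icc le_rfl hzb)) ⟨ha.le, hz0⟩
  exact (hmin ⟨⟨hy.1, hy.2.trans hzb⟩, hy0⟩).not_gt (hy.2.trans_lt hz.2)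

lemma mul_pow_sub_pow_le_sub_of_le_deriv {P P' : ℝ → ℝ} {a b c : ℝ} {N : ℕ} (hN : 1 ≤ N)
    (hab : a ≤ b) (hP : ContinuousOn P (Icc a b)) (hP' : ∀ x ∈ Ioo a b, HasDerivAt P (P' x) x)
    (hc : ∀ x ∈ Ioo a b, c * x ^ (N - 1) ≤ P' x) :
    c / N * (b ^ N - a ^ N) ≤ P b - P a := by
  have hN0 : (N : ℝ) ≠ 0 := by positivity
  have hpow (x : ℝ) : HasDerivAt (fun t => c / N * t ^ N) (c * x ^ (N - 1)) x :=
    ((hasDerivAt_pow N x).const_mul (c / N)).congr_deriv (by field_simp)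
  have hmono : MonotoneOn (fun x => P x - c / N * x ^ N) (Icc a b) := by
    refine monotoneOn_of_hasDerivWithinAt_nonneg (f' := fun x => P' x - c * x ^ (N - 1))
      (convex_Icc a b) (by fun_prop) (fun x hx => ?_) fun x hx => ?_ <;> rw [interior_Icc] at hx
    · exact ((hP' x hx).sub (hpow x)).hasDerivWithinAt
    · exact sub_nonneg.2 (hc x hx)
  linarith [hmono (left_mem_Icc.2 hab) (right_mem_Icc.2 hab) hab]

lemma le_mul_rpow_of_mul_deriv_le {F F' : ℝ → ℝ} {a L : ℝ} (ha : 0 < a)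
    (hF : ∀ s, a ≤ s → HasDerivAt F (F' s) s) (hL : ∀ s, a ≤ s → s * F' s ≤ L * F s) {s : ℝ}
    (hs : a ≤ s) : F s ≤ F a * a ^ (-L) * s ^ L := by
  have hpow (t : ℝ) (ht : 0 < t) : t ^ (-L) = t * t ^ (-L - 1) := by
    rw [mul_comm, ← rpow_add_one ht.ne']; ring_nf
  have hderiv (t : ℝ) (ht : a ≤ t) : HasDerivAt (fun t => F t * t ^ (-L))
      (F' t * t ^ (-L) + F t * (-L * t ^ (-L - 1))) t :=
    (hF t ht).mul (hasDerivAt_rpow_const (Or.inl (ha.trans_le ht).ne'))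
  have hanti : AntitoneOn (fun t => F t * t ^ (-L)) (Ici a) := by
    refine antitoneOn_of_hasDerivWithinAt_nonpos (convex_Ici a)
      (fun t ht => (hderiv t ht).continuousAt.continuousWithinAt)
      (fun t ht => (hderiv t (interior_subset ht)).hasDerivWithinAt) fun t ht => ?_
    have hat : a ≤ t := interior_subset ht
    have ht0 : 0 < t := ha.trans_le hat
    calc F' t * t ^ (-L) + F t * (-L * t ^ (-L - 1))
        = (t * F' t - L * F t) * t ^ (-L - 1) := by rw [hpow t ht0]; ring
      _ ≤ 0 := mul_nonpos_of_nonpos_of_nonneg (sub_nonpos.2 (hL t hat)) (by positivity)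
  have hs0 : 0 < s := ha.trans_le hs
  calc F s = F s * s ^ (-L) * s ^ L := by rw [mul_assoc, ← rpow_add hs0]; simp
    _ ≤ F a * a ^ (-L) * s ^ L :=
      mul_le_mul_of_nonneg_right (hanti self_mem_Ici hs hs) (by positivity)

lemma mul_rpow_le_pow_mul {p α L C κ R d r Ψ : ℝ} {N : ℕ} (hα : 0 ≤ α) (hN : N ≤ p * (1 + α))
    (hd : 0 < d) (hr : 0 < r) (hrR : r ≤ R) (hC : 0 < C) (hκ : 0 ≤ κ) (hΨ : 0 < Ψ)
    (hΨC : Ψ ≤ C * d ^ L) (h : κ * d ^ p ≤ Ψ * r ^ p) :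
    κ ^ (1 + α) / (C ^ α * R ^ (p * (1 + α) - N)) * d ^ (p * (1 + α) - α * L) ≤ r ^ N * Ψ := by
  have hR : 0 < R := hr.trans_le hrR
  have hgrowth : Ψ ^ α ≤ C ^ α * d ^ (α * L) := by
    rw [mul_comm α, rpow_mul hd.le, ← mul_rpow hC.le (by positivity)]
    exact rpow_le_rpow hΨ.le hΨC hα
  have hpow : r ^ (p * (1 + α)) ≤ R ^ (p * (1 + α) - N) * r ^ N := by
    rw [← sub_add_cancel (p * (1 + α)) N, rpow_add hr, rpow_natCast, add_sub_cancel_right]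
    gcongr
  rw [rpow_sub hd, div_mul_div_comm, div_le_iff₀ (by positivity)]
  calc κ ^ (1 + α) * d ^ (p * (1 + α)) = (κ * d ^ p) ^ (1 + α) := by
        rw [mul_rpow hκ (by positivity), ← rpow_mul hd.le]
    _ ≤ (Ψ * r ^ p) ^ (1 + α) := by gcongr
    _ = Ψ * Ψ ^ α * r ^ (p * (1 + α)) := by
        rw [mul_rpow hΨ.le (by positivity), ← rpow_mul hr.le, rpow_one_add' hΨ.le (by positivity)]
    _ ≤ Ψ * (C ^ α * d ^ (α * L)) * (R ^ (p * (1 + α) - N) * r ^ N) := by gcongr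
    _ = r ^ N * Ψ * (C ^ α * R ^ (p * (1 + α) - N) * d ^ (α * L)) := by ring

end RealAnalysis

section Flux

/-- The flux `r ^ (N - 1) φ_p(u')` of a radial function, whose derivative is prescribed by the
equation. -/
noncomputable def flux (p : ℝ) (N : ℕ) (u : ℝ → ℝ) (x : ℝ) : ℝ :=
  x ^ (N - 1) * phip p (deriv u x)

/-- The first critical point of a profile `u` which starts decreasing at `R1`. -/
structure IsFirstCriticalPoint (u : ℝ → ℝ) (R1 z : ℝ) : Prop where
  lt : R1 < z
  deriv_eq_zero : deriv u z = 0
  deriv_neg : ∀ x ∈ Ioo R1 z, deriv u x < 0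

variable {p : ℝ} {N : ℕ} {u : ℝ → ℝ} {x : ℝ}

lemma flux_of_deriv_eq_zero (hx : deriv u x = 0) : flux p N u x = 0 := by
  simp [flux, phip, hx]

lemma flux_neg_iff (hx : 0 < x) : flux p N u x < 0 ↔ deriv u x < 0 := by
  rw [flux, ← smul_eq_mul, smul_neg_iff_of_pos_left (pow_pos hx _), phip_neg_iff]

lemma neg_flux_of_deriv_neg (hp : p ≠ 1) (hx : deriv u x < 0) :
    -flux p N u x = x ^ (N - 1) * (-deriv u x) ^ (p - 1) := by
  rw [flux, ← mul_neg, ← abs_of_neg (phip_neg_iff.2 hx), abs_phip hp, abs_of_neg hx]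

lemma deriv_eq_zero_of_flux (hp : p ≠ 0) (hx : 0 < x) (h : flux p N u x = 0) :
    deriv u x = 0 := by
  have hphip : phip p (deriv u x) = 0 := (mul_eq_zero.1 h).resolve_left (pow_pos hx _).ne'
  rw [← abs_eq_zero, ← rpow_eq_zero (abs_nonneg _) hp, ← phip_mul_self hp, hphip, zero_mul]

end Flux

namespace CauchySol

variable {p R1 R2 d z : ℝ} {N : ℕ} {g u : ℝ → ℝ}

lemma continuousOn (S : CauchySol p N R1 R2 g u d) : ContinuousOn u (Icc R1 R2) :=
  fun x hx => (S.1 x hx).continuousAt.continuousWithinAt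

lemma left_eq (S : CauchySol p N R1 R2 g u d) : u R1 = d := S.2.2.1

lemma continuousOn_flux (S : CauchySol p N R1 R2 g u d) :
    ContinuousOn (flux p N u) (Icc R1 R2) := S.2.2.2.2.1

lemma hasDerivAt_flux (S : CauchySol p N R1 R2 g u d) {x : ℝ} (hx : x ∈ Ioc R1 R2) :
    HasDerivAt (flux p N u) (-(x ^ (N - 1)) * g (u x)) x := S.2.2.2.2.2 x hx

lemma flux_left (S : CauchySol p N R1 R2 g u d) : flux p N u R1 = 0 :=
  flux_of_deriv_eq_zero S.2.2.2.1

lemma flux_neg (S : CauchySol p N R1 R2 g u d) (hR1 : 0 ≤ R1) (hpos : ∀ s, 1 < s → 0 < g s)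
    {x : ℝ} (hx : x ∈ Ioc R1 R2) (hu : ∀ y ∈ Ioo R1 x, 1 < u y) : flux p N u x < 0 := by
  have hanti : StrictAntiOn (flux p N u) (Icc R1 x) := by
    refine strictAntiOn_of_hasDerivWithinAt_neg (f' := fun y => -(y ^ (N - 1)) * g (u y))
      (convex_Icc R1 x) (S.continuousOn_flux.mono (Icc_subset_Icc le_rfl hx.2))
      (fun y hy => ?_) fun y hy => ?_ <;> rw [interior_Icc] at hy
    · exact (S.hasDerivAt_flux ⟨hy.1, hy.2.le.trans hx.2⟩).hasDerivWithinAt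
    · have hy0 : 0 < y := hR1.trans_lt hy.1
      exact mul_neg_of_neg_of_pos (neg_neg_of_pos (pow_pos hy0 _)) (hpos _ (hu y hy))
  rw [← S.flux_left]
  exact hanti (left_mem_Icc.2 hx.1.le) (right_mem_Icc.2 hx.1.le) hx.1

lemma exists_isFirstCriticalPoint (S : CauchySol p N R1 R2 g u d) (hp : p ≠ 0) (hR1 : 0 ≤ R1)
    (hpos : ∀ s, 1 < s → 0 < g s) (hd : 1 < d) {x : ℝ} (hx : x ∈ Ioc R1 R2)
    (hux : 0 ≤ deriv u x) : ∃ z ∈ Ioc R1 R2, IsFirstCriticalPoint u R1 z := by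
  have hnear : ∀ᶠ y in 𝓝[>] R1, y < x ∧ ∀ t ∈ Ioo R1 y, 1 < u t := by
    have hu : ∀ᶠ t in 𝓝[>] R1, 1 < u t :=
      ((S.1 R1 ⟨le_rfl, hx.1.le.trans hx.2⟩).continuousAt.eventually_const_lt
        (hd.trans_eq S.left_eq.symm)).filter_mono nhdsWithin_le_nhds
    obtain ⟨b, hb, hu⟩ := mem_nhdsGT_iff_exists_Ioo_subset.1 hu
    filter_upwards [Ioo_mem_nhdsGT hx.1, Ioo_mem_nhdsGT hb] with y hyx hyb
    exact ⟨hyx.2, fun t ht => hu ⟨ht.1, ht.2.trans hyb.2⟩⟩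
  obtain ⟨y, ⟨hyx, hy⟩, hRy⟩ := (hnear.and self_mem_nhdsWithin).exists
  have hfluxy (t : ℝ) (ht : t ∈ Ioc R1 y) : flux p N u t < 0 :=
    S.flux_neg hR1 hpos ⟨ht.1, ht.2.trans (hyx.le.trans hx.2)⟩
      fun s hs => hy s ⟨hs.1, hs.2.trans_le ht.2⟩
  have hfluxx : 0 ≤ flux p N u x := not_lt.1 fun h =>
    hux.not_gt ((flux_neg_iff (hR1.trans_lt hx.1)).1 h)
  obtain ⟨z, hz, hz0, hneg⟩ := exists_first_zero hyx.le
    (S.continuousOn_flux.mono (Icc_subset_Icc hRy.le hx.2)) (hfluxy y ⟨hRy, le_rfl⟩) hfluxx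
  have hRz : R1 < z := hRy.trans hz.1
  refine ⟨z, ⟨hRz, hz.2.trans hx.2⟩, hRz, deriv_eq_zero_of_flux hp (hR1.trans_lt hRz) hz0,
    fun t ht => (flux_neg_iff (p := p) (N := N) (hR1.trans_lt ht.1)).1 ?_⟩
  rcases le_total t y with hty | hyt
  · exact hfluxy t ⟨ht.1, hty⟩
  · exact hneg t ⟨hyt, ht.2⟩

lemma strictAntiOn (S : CauchySol p N R1 R2 g u d) (hz : IsFirstCriticalPoint u R1 z)
    (hzR : z ≤ R2) : StrictAntiOn u (Icc R1 z) :=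
  strictAntiOn_of_deriv_neg (convex_Icc R1 z) (S.continuousOn.mono (Icc_subset_Icc le_rfl hzR))
    fun x hx => hz.deriv_neg x (interior_Icc (a := R1) ▸ hx)

lemma exists_mem_Ioo_eq (S : CauchySol p N R1 R2 g u d) (hz : IsFirstCriticalPoint u R1 z)
    (hzR : z ≤ R2) {s : ℝ} (hzs : u z < s) (hsd : s < d) : ∃ x ∈ Ioo R1 z, u x = s :=
  intermediate_value_Ioo' hz.lt.le (S.continuousOn.mono (Icc_subset_Icc le_rfl hzR))
    ⟨hzs, hsd.trans_eq S.left_eq.symm⟩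

lemma apply_le_one (S : CauchySol p N R1 R2 g u d) (hR1 : 0 ≤ R1)
    (hpos : ∀ s, 1 < s → 0 < g s) (hz : IsFirstCriticalPoint u R1 z) (hzR : z ≤ R2) :
    u z ≤ 1 := by
  by_contra! h
  refine (S.flux_neg hR1 hpos ⟨hz.lt, hzR⟩ fun y hy => h.trans ?_).ne
    (flux_of_deriv_eq_zero hz.deriv_eq_zero)
  exact S.strictAntiOn hz hzR ⟨hy.1.le, hy.2.le⟩ (right_mem_Icc.2 hz.lt.le) hy.2

lemma apply_nonneg (S : CauchySol p N R1 R2 g u d) (hR1 : 0 ≤ R1) (hneg : ∀ s < 0, 0 ≤ g s)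
    (hd : 0 < d) (hz : IsFirstCriticalPoint u R1 z) (hzR : z ≤ R2) : 0 ≤ u z := by
  by_contra! h
  obtain ⟨y, hy, hy0⟩ := S.exists_mem_Ioo_eq hz hzR h hd
  have hy0' : 0 < y := hR1.trans_lt hy.1
  have hanti : AntitoneOn (flux p N u) (Icc y z) := by
    refine antitoneOn_of_hasDerivWithinAt_nonpos (f' := fun x => -(x ^ (N - 1)) * g (u x))
      (convex_Icc y z) (S.continuousOn_flux.mono (Icc_subset_Icc hy.1.le hzR))
      (fun x hx => ?_) fun x hx => ?_ <;> rw [interior_Icc] at hx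
    · exact (S.hasDerivAt_flux ⟨hy.1.trans hx.1, hx.2.le.trans hzR⟩).hasDerivWithinAt
    · have hux : u x < 0 := hy0 ▸ S.strictAntiOn hz hzR ⟨hy.1.le, hy.2.le⟩
        ⟨(hy.1.trans hx.1).le, hx.2.le⟩ hx.1
      have hx0 : 0 < x := hy0'.trans hx.1
      exact mul_nonpos_of_nonpos_of_nonneg (neg_nonpos.2 (by positivity)) (hneg _ hux)
  refine ((hanti (left_mem_Icc.2 hy.2.le) (right_mem_Icc.2 hy.2.le) hy.2.le).trans_lt ?_).ne
    (flux_of_deriv_eq_zero hz.deriv_eq_zero)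
  exact (flux_neg_iff hy0').2 (hz.deriv_neg y hy)

lemma mul_pow_sub_pow_le_flux_sub (S : CauchySol p N R1 R2 g u d) (hN : 1 ≤ N) (hR1 : 0 ≤ R1)
    {a b c : ℝ} (ha : R1 ≤ a) (hab : a ≤ b) (hb : b ≤ R2) (hc : ∀ x ∈ Ioo a b, g (u x) ≤ c) :
    -c / N * (b ^ N - a ^ N) ≤ flux p N u b - flux p N u a := by
  refine mul_pow_sub_pow_le_sub_of_le_deriv hN hab
    (S.continuousOn_flux.mono (Icc_subset_Icc ha hb))
    (fun x hx => S.hasDerivAt_flux ⟨ha.trans_lt hx.1, hx.2.le.trans hb⟩) fun x hx => ?_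
  have hx0 : 0 < x := (hR1.trans ha).trans_lt hx.1
  nlinarith [mul_le_mul_of_nonneg_left (hc x hx) (pow_pos hx0 (N - 1)).le]

lemma flux_sub_le_mul_pow_sub_pow (S : CauchySol p N R1 R2 g u d) (hN : 1 ≤ N) (hR1 : 0 ≤ R1)
    {a b c : ℝ} (ha : R1 ≤ a) (hab : a ≤ b) (hb : b ≤ R2) (hc : ∀ x ∈ Ioo a b, c ≤ g (u x)) :
    flux p N u b - flux p N u a ≤ -c / N * (b ^ N - a ^ N) := by
  have hneg := mul_pow_sub_pow_le_sub_of_le_deriv hN hab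
    (S.continuousOn_flux.mono (Icc_subset_Icc ha hb)).neg
    (fun x hx => (S.hasDerivAt_flux ⟨ha.trans_lt hx.1, hx.2.le.trans hb⟩).neg) (c := c)
    fun x hx => ?_
  · simp only [Pi.neg_apply] at hneg
    rw [neg_div, neg_mul]
    linarith
  · have hx0 : 0 < x := (hR1.trans ha).trans_lt hx.1
    nlinarith [mul_le_mul_of_nonneg_left (hc x hx) (pow_pos hx0 (N - 1)).le]

lemma exists_neg_deriv_eq_slope (S : CauchySol p N R1 R2 g u d) {a b : ℝ} (ha : R1 ≤ a)
    (hab : a < b) (hb : b ≤ R2) : ∃ y ∈ Ioo a b, -deriv u y = (u a - u b) / (b - a) := by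
  obtain ⟨y, hy, hslope⟩ := exists_deriv_eq_slope u hab
    (S.continuousOn.mono (Icc_subset_Icc ha hb)) fun x hx =>
      (S.1 x ⟨ha.trans hx.1.le, hx.2.le.trans hb⟩).differentiableWithinAt
  exact ⟨y, hy, by rw [hslope, ← neg_div, neg_sub]⟩

lemma pow_mul_rpow_le (S : CauchySol p N R1 R2 g u d) (hp : 1 < p) (hN : 1 ≤ N) (hR1 : 0 ≤ R1)
    (hpos : ∀ s, 1 < s → 0 < g s) {B : ℝ} (hB0 : 0 ≤ B) (hB : ∀ s, -B ≤ g s)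
    (hz : IsFirstCriticalPoint u R1 z) (hzR : z ≤ R2) {x : ℝ} (hx : x ∈ Ico R1 z)
    (hux : 1 ≤ u x) :
    x ^ (N - 1) * ((u x - 1) / R2) ^ (p - 1) ≤ B / N * R2 ^ N := by
  have hx0 : 0 ≤ x := hR1.trans hx.1
  obtain ⟨y, hy, hslope⟩ := S.exists_neg_deriv_eq_slope hx.1 hx.2 hzR
  have hy0 : 0 < y := hx0.trans_lt hy.1
  have hyR : R1 < y := hx.1.trans_lt hy.1
  have hsteep : (u x - 1) / R2 ≤ -deriv u y := by
    rw [hslope]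
    have := S.apply_le_one hR1 hpos hz hzR
    exact div_le_div₀ (by linarith) (by linarith) (sub_pos.2 hx.2) (by linarith)
  calc x ^ (N - 1) * ((u x - 1) / R2) ^ (p - 1)
      ≤ y ^ (N - 1) * (-deriv u y) ^ (p - 1) := by
        have : 0 ≤ (u x - 1) / R2 := div_nonneg (sub_nonneg.2 hux) (by linarith [hy.2])
        gcongr
        exact hy.1.le
    _ = flux p N u z - flux p N u y := by
        rw [flux_of_deriv_eq_zero hz.deriv_eq_zero, zero_sub,
          neg_flux_of_deriv_neg hp.ne' (hz.deriv_neg y ⟨hyR, hy.2⟩)]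
    _ ≤ B / N * (z ^ N - y ^ N) := by
        simpa using S.flux_sub_le_mul_pow_sub_pow hN hR1 hyR.le hy.2.le hzR fun t _ => hB (u t)
    _ ≤ B / N * R2 ^ N := by
        gcongr
        exact (sub_le_self _ (by positivity)).trans
          (pow_le_pow_left₀ (hy0.le.trans hy.2.le) hzR N)

lemma neg_deriv_rpow_le (S : CauchySol p N R1 R2 g u d) (hp : 1 < p) (hN : 1 ≤ N) (hR1 : 0 ≤ R1)
    (hz : IsFirstCriticalPoint u R1 z) (hzR : z ≤ R2) {y K : ℝ} (hy : y ∈ Ioo R1 z)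
    (hK0 : 0 ≤ K) (hK : ∀ s ∈ Icc (u y) d, g s ≤ K) : (-deriv u y) ^ (p - 1) ≤ K * y := by
  have hanti := (S.strictAntiOn hz hzR).antitoneOn
  have hy0 : 0 < y := hR1.trans_lt hy.1
  have hgy : ∀ t ∈ Ioo R1 y, g (u t) ≤ K := fun t ht => by
    have htz : t ∈ Icc R1 z := ⟨ht.1.le, (ht.2.trans hy.2).le⟩
    exact hK _ ⟨hanti htz ⟨hy.1.le, hy.2.le⟩ ht.2.le,
      (hanti (left_mem_Icc.2 hz.lt.le) htz ht.1.le).trans_eq S.left_eq⟩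
  have hbound := S.mul_pow_sub_pow_le_flux_sub hN hR1 le_rfl hy.1.le (hy.2.le.trans hzR) hgy
  have hKN : K / N ≤ K := div_le_self hK0 (by exact_mod_cast hN)
  refine le_of_mul_le_mul_left ?_ (pow_pos hy0 (N - 1))
  calc y ^ (N - 1) * (-deriv u y) ^ (p - 1)
      = -flux p N u y := (neg_flux_of_deriv_neg hp.ne' (hz.deriv_neg y hy)).symm
    _ ≤ K / N * (y ^ N - R1 ^ N) := by
        rw [S.flux_left, neg_div, neg_mul] at hbound
        linarith
    _ ≤ K * y ^ N := by
        gcongr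
        · exact sub_nonneg.2 (pow_le_pow_left₀ hR1 hy.1.le N)
        · exact sub_le_self _ (pow_nonneg hR1 N)
    _ = y ^ (N - 1) * (K * y) := by rw [← pow_sub_one_mul (by omega : N ≠ 0) y]; ring

lemma rpow_sub_le (S : CauchySol p N R1 R2 g u d) (hp : 1 < p) (hN : 1 ≤ N) (hR1 : 0 ≤ R1)
    (hz : IsFirstCriticalPoint u R1 z) (hzR : z ≤ R2) {x K : ℝ} (hx : x ∈ Ioo R1 z)
    (hK0 : 0 ≤ K) (hK : ∀ s ∈ Icc (u x) d, g s ≤ K) : (d - u x) ^ (p - 1) ≤ K * x ^ p := by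
  have hanti := S.strictAntiOn hz hzR
  have hx0 : 0 < x := hR1.trans_lt hx.1
  obtain ⟨y, hy, hslope⟩ := S.exists_neg_deriv_eq_slope le_rfl hx.1 (hx.2.le.trans hzR)
  have hyz : y < z := hy.2.trans hx.2
  have hux : u x < d := S.left_eq ▸ hanti (left_mem_Icc.2 hz.lt.le) ⟨hx.1.le, hx.2.le⟩ hx.1
  have huxy : u x < u y := hanti ⟨hy.1.le, hyz.le⟩ ⟨hx.1.le, hx.2.le⟩ hy.2
  have hquot : 0 ≤ (d - u x) / x := div_nonneg (sub_pos.2 hux).le hx0.le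
  have hsteep : (d - u x) / x ≤ -deriv u y := by
    rw [hslope, S.left_eq]
    exact div_le_div_of_nonneg_left (sub_pos.2 hux).le (sub_pos.2 hx.1) (sub_le_self x hR1)
  calc (d - u x) ^ (p - 1) = ((d - u x) / x) ^ (p - 1) * x ^ (p - 1) := by
        rw [← mul_rpow hquot hx0.le, div_mul_cancel₀ _ hx0.ne']
    _ ≤ (-deriv u y) ^ (p - 1) * x ^ (p - 1) := by gcongr
    _ ≤ K * x * x ^ (p - 1) := by
        gcongr
        exact (S.neg_deriv_rpow_le hp hN hR1 hz hzR ⟨hy.1, hyz⟩ hK0 fun s hs =>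
          hK s ⟨huxy.le.trans hs.1, hs.2⟩).trans (mul_le_mul_of_nonneg_left hy.2.le hK0)
    _ = K * x ^ p := by rw [mul_assoc, ← rpow_one_add' hx0.le (by linarith)]; ring_nf

end CauchySol

section LargeData

/-- Solutions of the Cauchy problem with sufficiently large datum are decreasing, with no critical
point after `R1`. -/
def DecreasingForLargeData (p : ℝ) (N : ℕ) (R1 R2 : ℝ) (g : ℝ → ℝ) : Prop :=
  ∀ᶠ d in atTop, ∀ u, CauchySol p N R1 R2 g u d → ∀ x ∈ Ioc R1 R2, deriv u x < 0

namespace DecreasingForLargeData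

variable {p R1 R2 : ℝ} {N : ℕ} {g : ℝ → ℝ}

lemma of_not_isFirstCriticalPoint (hp : p ≠ 0) (hR1 : 0 ≤ R1) (hpos : ∀ s, 1 < s → 0 < g s)
    (h : ∀ᶠ d in atTop, ∀ u, CauchySol p N R1 R2 g u d →
      ∀ z ∈ Ioc R1 R2, ¬IsFirstCriticalPoint u R1 z) :
    DecreasingForLargeData p N R1 R2 g := by
  filter_upwards [h, eventually_gt_atTop 1] with d hd hd1 u S x hx
  by_contra! hux
  obtain ⟨z, hzR, hz⟩ := S.exists_isFirstCriticalPoint hp hR1 hpos hd1 hx hux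
  exact hd u S z hzR hz

lemma of_exists_apply_eq (hp : 1 < p) (hN : 1 ≤ N) (hR1 : 0 ≤ R1) (hR12 : R1 < R2)
    (hpos : ∀ s, 1 < s → 0 < g s) {B : ℝ} (hB0 : 0 ≤ B) (hB : ∀ s, -B ≤ g s)
    {ρ e : ℝ} (hρ : 0 < ρ) (he : 0 < e)
    (h : ∀ᶠ d in atTop, ∀ u, CauchySol p N R1 R2 g u d → ∀ z ∈ Ioc R1 R2,
      IsFirstCriticalPoint u R1 z → ∃ x ∈ Ico R1 z, ρ ≤ x ∧ u x = e * d) :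
    DecreasingForLargeData p N R1 R2 g := by
  have hR2 : 0 < R2 := hR1.trans_lt hR12
  have htend : Tendsto (fun d : ℝ => ρ ^ (N - 1) * ((e * d - 1) / R2) ^ (p - 1)) atTop atTop :=
    ((tendsto_rpow_atTop (sub_pos.2 hp)).comp ((tendsto_atTop_add_const_right _ (-1)
      (tendsto_id.const_mul_atTop he)).atTop_div_const hR2)).const_mul_atTop (pow_pos hρ _)
  refine of_not_isFirstCriticalPoint (by positivity) hR1 hpos ?_
  filter_upwards [h, htend.eventually_gt_atTop (B / N * R2 ^ N),
    (tendsto_id.const_mul_atTop he).eventually_ge_atTop 1] with d hd hlarge hed u S z hzR hz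
  obtain ⟨x, hx, hρx, hux⟩ := hd u S z hzR hz
  have hdrop := S.pow_mul_rpow_le hp hN hR1 hpos hB0 hB hz hzR.2 hx (hed.trans_eq hux.symm)
  rw [hux] at hdrop
  refine (hlarge.trans_le (le_trans ?_ hdrop)).false
  have : 0 ≤ (e * d - 1) / R2 := div_nonneg (sub_nonneg.2 hed) hR2.le
  gcongr

lemma of_pos_left (hp : 1 < p) (hN : 1 ≤ N) (hR1 : 0 < R1) (hR12 : R1 < R2)
    (hpos : ∀ s, 1 < s → 0 < g s) {B : ℝ} (hB0 : 0 ≤ B) (hB : ∀ s, -B ≤ g s) :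
    DecreasingForLargeData p N R1 R2 g :=
  of_exists_apply_eq hp hN hR1.le hR12 hpos hB0 hB hR1 one_pos <| Eventually.of_forall
    fun d _ S _ _ hz => ⟨R1, ⟨le_rfl, hz.lt⟩, le_rfl, by rw [S.left_eq, one_mul]⟩

lemma of_le_mul_rpow (hp : 1 < p) (hN : 1 ≤ N) (hR1 : 0 ≤ R1) (hR12 : R1 < R2)
    (hpos : ∀ s, 1 < s → 0 < g s) {B : ℝ} (hB0 : 0 ≤ B) (hB : ∀ s, -B ≤ g s) {M : ℝ} (hM : 0 < M)
    (hg : ∀ s, 1 ≤ s → g s ≤ M * s ^ (p - 1)) :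
    DecreasingForLargeData p N R1 R2 g := by
  have hp0 : 0 < p := one_pos.trans hp
  have hρ : 0 < (1 / 2 : ℝ) ^ (p - 1) / M := by positivity
  refine of_exists_apply_eq (e := 1 / 2) hp hN hR1 hR12 hpos hB0 hB
    (rpow_pos_of_pos hρ p⁻¹) one_half_pos ?_
  filter_upwards [eventually_gt_atTop 2] with d hd u S z hzR hz
  have hd0 : 0 < d := two_pos.trans hd
  have huz := S.apply_le_one hR1 hpos hz hzR.2
  obtain ⟨x, hx, hux⟩ := S.exists_mem_Ioo_eq hz hzR.2 (s := 1 / 2 * d) (by linarith) (by linarith)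
  have hx0 : 0 < x := hR1.trans_lt hx.1
  refine ⟨x, ⟨hx.1.le, hx.2⟩, ?_, hux⟩
  have hdrop := S.rpow_sub_le hp hN hR1 hz hzR.2 hx (by positivity)
    fun s hs => (hg s (by linarith [hs.1])).trans <| mul_le_mul_of_nonneg_left
      (rpow_le_rpow (by linarith [hs.1]) hs.2 (sub_pos.2 hp).le) hM.le
  rw [hux, show d - 1 / 2 * d = 1 / 2 * d by ring, mul_rpow one_half_pos.le hd0.le,
    mul_right_comm] at hdrop
  rw [rpow_inv_le_iff_of_pos hρ.le hx0.le hp0, div_le_iff₀' hM]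
  exact le_of_mul_le_mul_right hdrop (rpow_pos_of_pos hd0 _)

end DecreasingForLargeData

end LargeData

section Nonlinearity

variable {p L : ℝ} {N : ℕ} {f : ℝ → ℝ} {s : ℝ}

lemma fhat_of_nonneg (hs : 0 ≤ s) : fhat f s = f s := if_pos hs

lemma fhat_of_neg (hs : s < 0) : fhat f s = 0 := if_neg hs.not_ge

lemma fhat_pos (hpos : ∀ s, 1 < s → 0 < f s) (hs : 1 < s) : 0 < fhat f s :=
  (hpos s hs).trans_eq (fhat_of_nonneg (zero_le_one.trans hs.le)).symm

lemma exists_neg_le_fhat (hf : ContinuousOn f (Ici 0)) (hpos : ∀ s, 1 < s → 0 < f s) :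
    ∃ B, 0 ≤ B ∧ ∀ s, -B ≤ fhat f s := by
  obtain ⟨m, hm⟩ := isCompact_Icc.bddBelow_image (hf.mono (Icc_subset_Ici_self (a := 1) (b := 0)))
  refine ⟨|m|, abs_nonneg m, fun s => ?_⟩
  rcases lt_or_ge s 0 with hs0 | hs0
  · simp [fhat_of_neg hs0]
  rcases le_or_gt s 1 with hs1 | hs1
  · rw [fhat_of_nonneg hs0]
    exact (neg_abs_le m).trans (hm ⟨s, ⟨hs0, hs1⟩, rfl⟩)
  · exact (neg_nonpos.2 (abs_nonneg m)).trans (fhat_pos hpos hs1).le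

lemma le_fstar (hf : ContinuousOn f (Ici 0)) {σ : ℝ} (hσ : σ ∈ Icc 1 s) : f σ ≤ fstar f s :=
  le_csSup (isCompact_Icc.bddAbove_image (hf.mono fun _ hx => zero_le_one.trans hx.1))
    ⟨σ, hσ, rfl⟩

lemma fstar_pos (hf : ContinuousOn f (Ici 0)) (hpos : ∀ s, 1 < s → 0 < f s) (hs : 1 < s) :
    0 < fstar f s :=
  (hpos s hs).trans_le (le_fstar hf ⟨hs.le, le_rfl⟩)

lemma Fsubl.exists_le_mul_rpow (h : Fsubl p f) (hp : 1 ≤ p) (hf : ContinuousOn f (Ici 0))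
    (hpos : ∀ s, 1 < s → 0 < f s) :
    ∃ M, 0 < M ∧ ∀ s, 1 ≤ s → f s ≤ M * s ^ (p - 1) := by
  obtain ⟨M, hM, hlim⟩ := h
  obtain ⟨s₀, hs₀⟩ := eventually_atTop.1 ((hlim 1 one_pos).and (eventually_gt_atTop 1))
  have hfs : 0 < fstar f s₀ := fstar_pos hf hpos (hs₀ s₀ le_rfl).2
  refine ⟨M + 1 + fstar f s₀, by positivity, fun s hs => ?_⟩
  have hs1 : 1 ≤ s ^ (p - 1) := one_le_rpow hs (sub_nonneg.2 hp)
  rcases le_total s s₀ with hss | hss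
  · calc f s ≤ fstar f s₀ * 1 := (le_fstar hf ⟨hs, hss⟩).trans_eq (mul_one _).symm
      _ ≤ (M + 1 + fstar f s₀) * s ^ (p - 1) := by gcongr; linarith
  · calc f s ≤ (M + 1) * s ^ (p - 1) := (div_le_iff₀ (by positivity)).1 (hs₀ s hss).1
      _ ≤ (M + 1 + fstar f s₀) * s ^ (p - 1) :=
        mul_le_mul_of_nonneg_right (by linarith) (by positivity)

lemma continuousOn_Fint (hf : ContinuousOn f (Ici 0)) : ContinuousOn (Fint f) (Ici 0) := by
  intro s hs
  have hs2 : (0 : ℝ) ≤ s + 2 := add_nonneg hs zero_le_two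
  have hcont : ContinuousOn (Fint f) (uIcc 0 (s + 2)) :=
    intervalIntegral.continuousOn_primitive_interval'
      (hf.mono (uIcc_of_le hs2 ▸ Icc_subset_Ici_self)).intervalIntegrable
      (uIcc_of_le hs2 ▸ ⟨zero_le_one, by linarith [mem_Ici.1 hs]⟩)
  rw [uIcc_of_le hs2, ← Ici_inter_Iic] at hcont
  exact (hcont s ⟨hs, by simp⟩).mono_of_mem_nhdsWithin
    (inter_mem_nhdsWithin _ (Iic_mem_nhds (by simp)))

lemma hasDerivAt_Fint (hf : ContinuousOn f (Ici 0)) (hs : 0 < s) :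
    HasDerivAt (Fint f) (f s) s := by
  refine intervalIntegral.integral_hasDerivAt_right ?_
    ((hf.mono Ioi_subset_Ici_self).stronglyMeasurableAtFilter isOpen_Ioi s hs)
    (hf.continuousAt (Ici_mem_nhds hs))
  exact (hf.mono fun x hx => (lt_min one_pos hs).le.trans hx.1).intervalIntegrable

lemma Fint_one (f : ℝ → ℝ) : Fint f 1 = 0 := intervalIntegral.integral_same

lemma strictMonoOn_Fint (hf : ContinuousOn f (Ici 0)) (hpos : ∀ s, 1 < s → 0 < f s) :
    StrictMonoOn (Fint f) (Ici 1) := by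
  refine strictMonoOn_of_hasDerivWithinAt_pos (f' := f) (convex_Ici 1)
    ((continuousOn_Fint hf).mono (Ici_subset_Ici.2 zero_le_one)) (fun x hx => ?_) fun x hx => ?_
    <;> rw [interior_Ici] at hx
  · exact (hasDerivAt_Fint hf (one_pos.trans hx)).hasDerivWithinAt
  · exact hpos x hx

lemma Fint_pos (hf : ContinuousOn f (Ici 0)) (hpos : ∀ s, 1 < s → 0 < f s) (hs : 1 < s) :
    0 < Fint f s :=
  (Fint_one f).symm.trans_lt (strictMonoOn_Fint hf hpos self_mem_Ici hs.le hs)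

lemma Fhat_of_nonneg (hs : 0 ≤ s) : Fhat f s = Fint f s :=
  intervalIntegral.integral_congr fun _ hx => fhat_of_nonneg ((le_min zero_le_one hs).trans hx.1)

lemma hasDerivAt_Fhat (hf : ContinuousOn f (Ici 0)) (hs : 0 < s) :
    HasDerivAt (Fhat f) (f s) s :=
  (hasDerivAt_Fint hf hs).congr_of_eventuallyEq <|
    (eventually_gt_nhds hs).mono fun _ hx => Fhat_of_nonneg hx.le

lemma nOverPstar_nonneg (hp : 0 < p) : 0 ≤ nOverPstar p N := by
  rw [nOverPstar]
  split_ifs with h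
  exacts [div_nonneg (sub_nonneg.2 h.le) hp.le, le_rfl]

lemma nOverPstar_mul_lt (hp : 0 < p) (hN : 1 ≤ N) (hL : (L : EReal) < pstar p N) :
    nOverPstar p N * L < N := by
  rw [pstar] at hL
  rw [nOverPstar]
  split_ifs at hL ⊢ with h
  · rw [EReal.coe_lt_coe_iff, lt_div_iff₀ (sub_pos.2 h)] at hL
    rw [div_mul_eq_mul_div, div_lt_iff₀ hp]
    linarith
  · rw [zero_mul]
    positivity

lemma le_mul_one_add_nOverPstar (hp : 0 < p) : N ≤ p * (1 + nOverPstar p N) := by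
  rw [nOverPstar]
  split_ifs with h
  · exact le_of_eq (by field_simp; ring)
  · linarith

/-- The part of the subcriticality condition `(f_subc)` that bounds the growth of `f`, without the
requirement that `f` be superlinear. -/
def SubcriticalGrowth (p : ℝ) (N : ℕ) (f : ℝ → ℝ) : Prop :=
  ∃ η L : ℝ, 0 < η ∧ η < 1 ∧ (L : EReal) < pstar p N ∧
    ∀ᶠ s in atTop, fstar f s * s / Fint f (η * s) ≤ L

lemma Fsubc.subcriticalGrowth (h : Fsubc p N f) : SubcriticalGrowth p N f :=
  let ⟨η, _, hη0, hη1, L, hLp, hL⟩ := h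
  ⟨η, L, hη0, hη1, hLp, hL⟩

/-- The inequality behind `(f_subc)` with fixed constants: `f*(s) s ≤ L F(η s)` for `s ≥ s₀`,
where `s₀` is so large that `F(η s)` is positive. -/
structure FstarBound (f : ℝ → ℝ) (η L s₀ : ℝ) : Prop where
  pos : 0 < η
  lt_one : η < 1
  one_lt_mul_start : 1 < η * s₀
  fstar_mul_le : ∀ s, s₀ ≤ s → fstar f s * s ≤ L * Fint f (η * s)

lemma SubcriticalGrowth.exists_fstarBound (h : SubcriticalGrowth p N f)
    (hf : ContinuousOn f (Ici 0)) (hpos : ∀ s, 1 < s → 0 < f s) :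
    ∃ η L s₀ : ℝ, (L : EReal) < pstar p N ∧ FstarBound f η L s₀ := by
  obtain ⟨η, L, hη0, hη1, hLp, hL⟩ := h
  obtain ⟨s₀, hs₀⟩ := eventually_atTop.1
    (hL.and ((tendsto_id.const_mul_atTop hη0).eventually_gt_atTop 1))
  exact ⟨η, L, s₀, hLp, hη0, hη1, (hs₀ s₀ le_rfl).2, fun s hs =>
    (div_le_iff₀ (Fint_pos hf hpos (hs₀ s hs).2)).1 (hs₀ s hs).1⟩

namespace FstarBound

variable {η s₀ : ℝ}

lemma one_lt_mul (h : FstarBound f η L s₀) (hs : s₀ ≤ s) : 1 < η * s :=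
  h.one_lt_mul_start.trans_le (mul_le_mul_of_nonneg_left hs h.pos.le)

lemma mul_lt_self (h : FstarBound f η L s₀) (hs : s₀ ≤ s) : η * s < s :=
  mul_lt_of_lt_one_left (pos_of_mul_pos_right (one_pos.trans (h.one_lt_mul hs)) h.pos.le) h.lt_one

lemma one_lt (h : FstarBound f η L s₀) (hs : s₀ ≤ s) : 1 < s :=
  (h.one_lt_mul hs).trans (h.mul_lt_self hs)

lemma const_pos (h : FstarBound f η L s₀) (hf : ContinuousOn f (Ici 0))
    (hpos : ∀ s, 1 < s → 0 < f s) : 0 < L :=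
  pos_of_mul_pos_left ((mul_pos (fstar_pos hf hpos (h.one_lt le_rfl))
    (one_pos.trans (h.one_lt le_rfl))).trans_le (h.fstar_mul_le s₀ le_rfl))
    (Fint_pos hf hpos (h.one_lt_mul le_rfl)).le

lemma fstar_mul_le_Fint (h : FstarBound f η L s₀) (hf : ContinuousOn f (Ici 0))
    (hpos : ∀ s, 1 < s → 0 < f s) (hs : s₀ ≤ s) : fstar f s * s ≤ L * Fint f s :=
  (h.fstar_mul_le s hs).trans <| mul_le_mul_of_nonneg_left ((strictMonoOn_Fint hf hpos).monotoneOn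
    (h.one_lt_mul hs).le (h.one_lt hs).le (h.mul_lt_self hs).le) (h.const_pos hf hpos).le

lemma apply_mul_le_Fint (h : FstarBound f η L s₀) (hf : ContinuousOn f (Ici 0))
    (hpos : ∀ s, 1 < s → 0 < f s) (hs : s₀ ≤ s) : f s * s ≤ L * Fint f s :=
  have hs1 := h.one_lt hs
  (mul_le_mul_of_nonneg_right (le_fstar hf ⟨hs1.le, le_rfl⟩) (one_pos.trans hs1).le).trans
    (h.fstar_mul_le_Fint hf hpos hs)

lemma exists_fstar_mul_le_rpow (h : FstarBound f η L s₀) (hf : ContinuousOn f (Ici 0))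
    (hpos : ∀ s, 1 < s → 0 < f s) :
    ∃ C, 0 < C ∧ ∀ s, s₀ ≤ s → fstar f s * s ≤ C * s ^ L := by
  have hs₀ : 0 < s₀ := one_pos.trans (h.one_lt le_rfl)
  have hL := h.const_pos hf hpos
  have hF := Fint_pos hf hpos (h.one_lt le_rfl)
  refine ⟨L * (Fint f s₀ * s₀ ^ (-L)), by positivity, fun s hs => ?_⟩
  calc fstar f s * s ≤ L * Fint f s := h.fstar_mul_le_Fint hf hpos hs
    _ ≤ L * (Fint f s₀ * s₀ ^ (-L) * s ^ L) := by
        gcongr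
        exact le_mul_rpow_of_mul_deriv_le hs₀ (fun t ht => hasDerivAt_Fint hf (hs₀.trans_le ht))
          (fun t ht => (mul_comm _ _).trans_le (h.apply_mul_le_Fint hf hpos ht)) hs
    _ = L * (Fint f s₀ * s₀ ^ (-L)) * s ^ L := (mul_assoc _ _ _).symm

lemma exists_neg_le_density (h : FstarBound f η L s₀) (hf : ContinuousOn f (Ici 0))
    (hpos : ∀ s, 1 < s → 0 < f s) {α n : ℝ} (hα : 0 ≤ α) (hαL : α * L ≤ n) :
    ∃ C, 0 ≤ C ∧ ∀ s, 0 ≤ s → -C ≤ n * Fint f s - α * (f s * s) := by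
  have hcont : ContinuousOn (fun s => n * Fint f s - α * (f s * s)) (Ici 0) :=
    (continuousOn_const.mul (continuousOn_Fint hf)).sub
      (continuousOn_const.mul (hf.mul continuousOn_id))
  obtain ⟨m, hm⟩ := isCompact_Icc.bddBelow_image
    (hcont.mono (Icc_subset_Ici_self (a := s₀) (b := 0)))
  refine ⟨|m|, abs_nonneg m, fun s hs => ?_⟩
  rcases le_total s s₀ with hss | hss
  · exact (neg_abs_le m).trans (hm ⟨s, ⟨hs, hss⟩, rfl⟩)
  · have hF := Fint_pos hf hpos (h.one_lt hss)
    have hfs := mul_le_mul_of_nonneg_left (h.apply_mul_le_Fint hf hpos hss) hα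
    have hn := mul_le_mul_of_nonneg_right hαL hF.le
    linarith [abs_nonneg m]

lemma mul_Fint_le_density (h : FstarBound f η L s₀) (hf : ContinuousOn f (Ici 0))
    (hpos : ∀ s, 1 < s → 0 < f s) {α n d : ℝ} (hα : 0 ≤ α) (hn : 0 ≤ n) (hd : s₀ ≤ d)
    (hs : s ∈ Icc (η * d) d) :
    (n - α * L) * Fint f (η * d) ≤ n * Fint f s - α * (f s * s) := by
  have hs1 : 1 < s := (h.one_lt_mul hd).trans_le hs.1
  have hF : Fint f (η * d) ≤ Fint f s :=
    (strictMonoOn_Fint hf hpos).monotoneOn (h.one_lt_mul hd).le hs1.le hs.1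
  have hfs : f s * s ≤ L * Fint f (η * d) :=
    calc f s * s ≤ fstar f d * d := mul_le_mul (le_fstar hf ⟨hs1.le, hs.2⟩) hs.2
          (one_pos.trans hs1).le (fstar_pos hf hpos (h.one_lt hd)).le
      _ ≤ L * Fint f (η * d) := h.fstar_mul_le d hd
  linarith [mul_le_mul_of_nonneg_left hF hn, mul_le_mul_of_nonneg_left hfs hα]

end FstarBound

end Nonlinearity

section Pohozaev

/-- The functional `r ^ N E(r) + α r ^ (N - 1) φ_p(u') u` of Pohozaev type, where `E` is the energy;
the weight is taken to be `α = N / p*`. -/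
noncomputable def pohozaev (p : ℝ) (N : ℕ) (f u : ℝ → ℝ) (α x : ℝ) : ℝ :=
  x ^ N * energy p f u x + α * (u x * flux p N u x)

namespace CauchySol

variable {p R1 R2 d z α : ℝ} {N : ℕ} {f g u : ℝ → ℝ}

lemma hasDerivAt_phip_deriv (S : CauchySol p N R1 R2 g u d) (hN : 1 ≤ N) (hR1 : 0 ≤ R1) {x : ℝ}
    (hx : x ∈ Ioc R1 R2) :
    HasDerivAt (fun t => phip p (deriv u t))
      (-g (u x) - (N - 1) / x * phip p (deriv u x)) x := by
  have hx0 : 0 < x := hR1.trans_lt hx.1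
  have hpow : HasDerivAt (fun t : ℝ => t ^ (N - 1)) ((N - 1) / x * x ^ (N - 1)) x := by
    refine (hasDerivAt_pow (N - 1) x).congr_deriv ?_
    obtain ⟨n, rfl⟩ := Nat.exists_eq_add_of_le' hN
    rcases n with _ | n
    · simp
    · push_cast [Nat.add_sub_cancel]
      field_simp
      ring
  have hquot := (S.hasDerivAt_flux hx).div hpow (by positivity)
  refine (hquot.congr_of_eventuallyEq ?_).congr_deriv ?_
  · filter_upwards [eventually_gt_nhds hx0] with t ht
    exact (mul_div_cancel_left₀ _ (pow_pos ht _).ne').symm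
  · rw [flux]
    field_simp

lemma hasDerivAt_energy (S : CauchySol p N R1 R2 (fhat f) u d) (hp : 1 < p) (hN : 1 ≤ N)
    (hR1 : 0 ≤ R1) (hf : ContinuousOn f (Ici 0)) {x : ℝ} (hx : x ∈ Ioc R1 R2) (hux : 0 < u x) :
    HasDerivAt (energy p f u) (-((N - 1) / x * |deriv u x| ^ p)) x := by
  have hu : HasDerivAt u (deriv u x) x := (S.1 x ⟨hx.1.le, hx.2⟩).hasDerivAt
  have hkinetic := (hasDerivAt_abs_rpow_of_phip (.conjExponent hp)
    (S.hasDerivAt_phip_deriv hN hR1 hx)).div_const (p / (p - 1))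
  refine (hkinetic.add ((hasDerivAt_Fhat hf hux).comp x hu)).congr_deriv ?_
  have hq : p / (p - 1) ≠ 0 := div_ne_zero (by linarith) (by linarith)
  rw [conjExponent, mul_assoc, mul_div_cancel_left₀ _ hq, fhat_of_nonneg hux.le,
    ← phip_mul_self (by linarith)]
  ring

lemma hasDerivAt_pohozaev (S : CauchySol p N R1 R2 (fhat f) u d) (hp : 1 < p) (hN : 1 ≤ N)
    (hR1 : 0 ≤ R1) (hf : ContinuousOn f (Ici 0)) {x : ℝ} (hx : x ∈ Ioc R1 R2) (hux : 0 < u x) :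
    HasDerivAt (pohozaev p N f u α) (x ^ (N - 1) *
      (N * Fint f (u x) - α * (f (u x) * u x) + (α + 1 - N / p) * |deriv u x| ^ p)) x := by
  have hx0 : 0 < x := hR1.trans_lt hx.1
  have hu : HasDerivAt u (deriv u x) x := (S.1 x ⟨hx.1.le, hx.2⟩).hasDerivAt
  refine (((hasDerivAt_pow N x).mul (S.hasDerivAt_energy hp hN hR1 hf hx hux)).add
    ((hu.mul (S.hasDerivAt_flux hx)).const_mul α)).congr_deriv ?_
  rw [energy, flux, fhat_of_nonneg hux.le, Fhat_of_nonneg hux.le, ← phip_mul_self (by linarith),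
    ← pow_sub_one_mul (by omega : N ≠ 0) x]
  field_simp
  ring

lemma continuousOn_pohozaev (S : CauchySol p N R1 R2 (fhat f) u d) (hp : 0 ≤ p)
    (hf : ContinuousOn f (Ici 0)) (hzR : z ≤ R2) (hu : ∀ x ∈ Icc R1 z, 0 ≤ u x) :
    ContinuousOn (pohozaev p N f u α) (Icc R1 z) := by
  have hsub : Icc R1 z ⊆ Icc R1 R2 := Icc_subset_Icc le_rfl hzR
  have hcont := S.continuousOn.mono hsub
  have hpotential : ContinuousOn (fun x => Fhat f (u x)) (Icc R1 z) :=
    ((continuousOn_Fint hf).comp hcont hu).congr fun x hx => Fhat_of_nonneg (hu x hx)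
  have hkinetic : ContinuousOn (fun x => |deriv u x| ^ p) (Icc R1 z) :=
    (S.2.1.mono hsub).abs.rpow_const fun _ _ => Or.inr hp
  exact ((continuousOn_pow N).mul ((hkinetic.div_const _).add hpotential)).add
    (continuousOn_const.mul (hcont.mul (S.continuousOn_flux.mono hsub)))

lemma pohozaev_zero (S : CauchySol p N 0 R2 g u d) (hN : 1 ≤ N) : pohozaev p N f u α 0 = 0 := by
  rw [pohozaev, S.flux_left, zero_pow (by omega)]
  ring

lemma pohozaev_of_deriv_eq_zero (hp : p ≠ 0) {x : ℝ} (hx : deriv u x = 0) (hux : 0 ≤ u x) :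
    pohozaev p N f u α x = x ^ N * Fint f (u x) := by
  rw [pohozaev, energy, flux_of_deriv_eq_zero hx, hx, Fhat_of_nonneg hux, abs_zero, zero_rpow hp]
  ring

lemma mul_pow_sub_pow_le_pohozaev_sub (S : CauchySol p N R1 R2 (fhat f) u d) (hp : 1 < p)
    (hN : 1 ≤ N) (hR1 : 0 ≤ R1) (hd : 0 < d) (hf : ContinuousOn f (Ici 0))
    (hα : N ≤ p * (1 + α)) (hz : IsFirstCriticalPoint u R1 z) (hzR : z ≤ R2) {a b c : ℝ}
    (ha : R1 ≤ a) (hab : a ≤ b) (hb : b ≤ z)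
    (hc : ∀ x ∈ Ioo a b, c ≤ N * Fint f (u x) - α * (f (u x) * u x)) :
    c / N * (b ^ N - a ^ N) ≤ pohozaev p N f u α b - pohozaev p N f u α a := by
  have huz := S.apply_nonneg hR1 (fun _ hs => (fhat_of_neg hs).ge) hd hz hzR
  have hanti := S.strictAntiOn hz hzR
  have hzz : z ∈ Icc R1 z := right_mem_Icc.2 hz.lt.le
  refine mul_pow_sub_pow_le_sub_of_le_deriv hN hab
    ((S.continuousOn_pohozaev (by linarith) hf hzR fun x hx =>
      huz.trans (hanti.antitoneOn hx hzz hx.2)).mono (Icc_subset_Icc ha hb)) (fun x hx => ?_)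
    (P' := fun x => x ^ (N - 1) * (N * Fint f (u x) - α * (f (u x) * u x) +
      (α + 1 - N / p) * |deriv u x| ^ p)) fun x hx => ?_
  · have hxz : x < z := hx.2.trans_le hb
    have hRx : R1 < x := ha.trans_lt hx.1
    exact S.hasDerivAt_pohozaev hp hN hR1 hf ⟨hRx, hxz.le.trans hzR⟩
      (huz.trans_lt (hanti ⟨hRx.le, hxz.le⟩ hzz hxz))
  · have hx0 : 0 ≤ x := (hR1.trans ha).trans hx.1.le
    have hcoeff : 0 ≤ α + 1 - N / p := by
      rw [sub_nonneg, div_le_iff₀ (by linarith)]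
      linarith
    rw [mul_comm c]
    gcongr
    exact (hc x hx).trans (le_add_of_nonneg_right (by positivity))

end CauchySol

lemma FstarBound.mul_pow_le_pohozaev {p α R2 η L s₀ d z x : ℝ} {N : ℕ} {f u : ℝ → ℝ}
    (h : FstarBound f η L s₀) (S : CauchySol p N 0 R2 (fhat f) u d) (hp : 1 < p) (hN : 1 ≤ N)
    (hf : ContinuousOn f (Ici 0)) (hpos : ∀ s, 1 < s → 0 < f s) (hα : 0 ≤ α)
    (hαN : N ≤ p * (1 + α)) (hd : s₀ ≤ d) (hz : IsFirstCriticalPoint u 0 z) (hzR : z ≤ R2)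
    (hx : x ∈ Ioo 0 z) (hux : u x = η * d) :
    (N - α * L) * Fint f (η * d) / N * x ^ N ≤ pohozaev p N f u α x := by
  have hanti := (S.strictAntiOn hz hzR).antitoneOn
  have hlower := S.mul_pow_sub_pow_le_pohozaev_sub hp hN le_rfl (one_pos.trans (h.one_lt hd)) hf
    hαN hz hzR le_rfl hx.1.le hx.2.le fun t ht => by
      have htz : t ∈ Icc 0 z := ⟨ht.1.le, (ht.2.trans hx.2).le⟩
      exact h.mul_Fint_le_density hf hpos hα N.cast_nonneg hd
        ⟨hux ▸ hanti htz ⟨hx.1.le, hx.2.le⟩ ht.2.le,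
          (hanti (left_mem_Icc.2 hz.lt.le) htz ht.1.le).trans_eq S.left_eq⟩
  rwa [S.pohozaev_zero hN, zero_pow (by omega), sub_zero, sub_zero] at hlower

lemma FstarBound.exists_pow_mul_Fint_le {p α R2 η L s₀ : ℝ} {N : ℕ} {f : ℝ → ℝ}
    (h : FstarBound f η L s₀) (hp : 1 < p) (hN : 1 ≤ N) (hf : ContinuousOn f (Ici 0))
    (hpos : ∀ s, 1 < s → 0 < f s) (hα : 0 ≤ α) (hαL : α * L < N) (hαN : N ≤ p * (1 + α)) :
    ∃ K, ∀ d u z x, s₀ ≤ d → CauchySol p N 0 R2 (fhat f) u d → IsFirstCriticalPoint u 0 z →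
      z ≤ R2 → x ∈ Ioo 0 z → u x = η * d → x ^ N * Fint f (η * d) ≤ K := by
  obtain ⟨C, hC0, hC⟩ := h.exists_neg_le_density hf hpos hα hαL.le
  obtain ⟨D, hD⟩ := isCompact_Icc.bddAbove_image
    ((continuousOn_Fint hf).mono (Icc_subset_Ici_self (a := 1) (b := 0)))
  have hδ : 0 < N - α * L := sub_pos.2 hαL
  have : (0 : ℝ) < N := by positivity
  refine ⟨N / (N - α * L) * ((|D| + C / N) * R2 ^ N), fun d u z x hd S hz hzR hx hux => ?_⟩
  have hd0 : 0 < d := one_pos.trans (h.one_lt hd)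
  have huz0 := S.apply_nonneg le_rfl (fun _ hs => (fhat_of_neg hs).ge) hd0 hz hzR
  have huz1 := S.apply_le_one le_rfl (fun _ => fhat_pos hpos) hz hzR
  have hleft := h.mul_pow_le_pohozaev S hp hN hf hpos hα hαN hd hz hzR hx hux
  have hright := S.mul_pow_sub_pow_le_pohozaev_sub hp hN le_rfl hd0 hf hαN hz hzR hx.1.le hx.2.le
    le_rfl fun t ht => hC (u t) (huz0.trans ((S.strictAntiOn hz hzR).antitoneOn
      ⟨(hx.1.trans ht.1).le, ht.2.le⟩ (right_mem_Icc.2 hz.lt.le) ht.2.le))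
  rw [CauchySol.pohozaev_of_deriv_eq_zero (by linarith) hz.deriv_eq_zero huz0, neg_div,
    neg_mul] at hright
  have hzN : z ^ N ≤ R2 ^ N := pow_le_pow_left₀ hz.lt.le hzR N
  have hFz : z ^ N * Fint f (u z) ≤ R2 ^ N * |D| :=
    (mul_le_mul_of_nonneg_left ((hD ⟨u z, ⟨huz0, huz1⟩, rfl⟩).trans (le_abs_self D))
      (pow_nonneg hz.lt.le N)).trans (mul_le_mul_of_nonneg_right hzN (abs_nonneg D))
  have hCN : C / N * (z ^ N - x ^ N) ≤ C / N * R2 ^ N :=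
    mul_le_mul_of_nonneg_left (by linarith [pow_pos hx.1 N]) (by positivity)
  calc x ^ N * Fint f (η * d)
      = N / (N - α * L) * ((N - α * L) * Fint f (η * d) / N * x ^ N) := by field_simp
    _ ≤ N / (N - α * L) * ((|D| + C / N) * R2 ^ N) := by
        refine mul_le_mul_of_nonneg_left ?_ (by positivity)
        linarith

lemma FstarBound.decreasingForLargeData {p α R2 η L s₀ : ℝ} {N : ℕ} {f : ℝ → ℝ}
    (h : FstarBound f η L s₀) (hp : 1 < p) (hN : 1 ≤ N) (hR2 : 0 < R2)
    (hf : ContinuousOn f (Ici 0)) (hpos : ∀ s, 1 < s → 0 < f s) (hα : 0 ≤ α) (hαL : α * L < N)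
    (hαN : N ≤ p * (1 + α)) : DecreasingForLargeData p N 0 R2 (fhat f) := by
  obtain ⟨K, hK⟩ := h.exists_pow_mul_Fint_le (R2 := R2) hp hN hf hpos hα hαL hαN
  obtain ⟨C, hC, hgrowth⟩ := h.exists_fstar_mul_le_rpow hf hpos
  have hL := h.const_pos hf hpos
  have hκ : 0 < (1 - η) ^ (p - 1) := rpow_pos_of_pos (sub_pos.2 h.lt_one) _
  have htend := (tendsto_rpow_atTop (by linarith : 0 < p * (1 + α) - α * L)).const_mul_atTop
    (show 0 < ((1 - η) ^ (p - 1)) ^ (1 + α) / (C ^ α * R2 ^ (p * (1 + α) - N)) by positivity)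
  refine .of_not_isFirstCriticalPoint (by linarith) le_rfl (fun _ => fhat_pos hpos) ?_
  filter_upwards [eventually_ge_atTop s₀, htend.eventually_gt_atTop (L * K)]
    with d hd hlarge u S z hzR hz
  have hd0 : 0 < d := one_pos.trans (h.one_lt hd)
  have huz := S.apply_le_one le_rfl (fun _ => fhat_pos hpos) hz hzR.2
  obtain ⟨x, hx, hux⟩ := S.exists_mem_Ioo_eq hz hzR.2 (huz.trans_lt (h.one_lt_mul hd))
    (h.mul_lt_self hd)
  have hfstar := fstar_pos hf hpos (h.one_lt hd)
  have hdrop := S.rpow_sub_le hp hN le_rfl hz hzR.2 hx hfstar.le fun s hs => by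
    have hs1 : 1 ≤ s := (h.one_lt_mul hd).le.trans (hux ▸ hs.1)
    exact (fhat_of_nonneg (zero_le_one.trans hs1)).trans_le (le_fstar hf ⟨hs1, hs.2⟩)
  rw [hux, ← one_sub_mul, mul_rpow (sub_pos.2 h.lt_one).le hd0.le] at hdrop
  have hdrop' : (1 - η) ^ (p - 1) * d ^ p ≤ fstar f d * d * x ^ p := by
    have := mul_le_mul_of_nonneg_right hdrop hd0.le
    rw [mul_assoc, ← rpow_add_one hd0.ne', sub_add_cancel] at this
    linarith
  refine (hlarge.trans_le ?_).false
  calc _ ≤ x ^ N * (fstar f d * d) := mul_rpow_le_pow_mul hα hαN hd0 hx.1 (hx.2.le.trans hzR.2)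
        hC hκ.le (mul_pos hfstar hd0) (hgrowth d hd) hdrop'
    _ ≤ x ^ N * (L * Fint f (η * d)) :=
        mul_le_mul_of_nonneg_left (h.fstar_mul_le d hd) (pow_pos hx.1 N).le
    _ = L * (x ^ N * Fint f (η * d)) := by ring
    _ ≤ L * K := mul_le_mul_of_nonneg_left (hK d u z x hd S hz hzR.2 hx hux) hL.le

lemma SubcriticalGrowth.decreasingForLargeData {p R2 : ℝ} {N : ℕ} {f : ℝ → ℝ}
    (h : SubcriticalGrowth p N f) (hp : 1 < p) (hN : 1 ≤ N) (hR2 : 0 < R2)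
    (hf : ContinuousOn f (Ici 0)) (hpos : ∀ s, 1 < s → 0 < f s) :
    DecreasingForLargeData p N 0 R2 (fhat f) := by
  obtain ⟨η, L, s₀, hL, hbound⟩ := h.exists_fstarBound hf hpos
  have hp0 : 0 < p := one_pos.trans hp
  exact hbound.decreasingForLargeData hp hN hR2 hf hpos (nOverPstar_nonneg hp0)
    (nOverPstar_mul_lt hp0 hN hL) (le_mul_one_add_nOverPstar hp0)

end Pohozaev

lemma Fsubl.decreasingForLargeData {p R1 R2 : ℝ} {N : ℕ} {f : ℝ → ℝ} (h : Fsubl p f) (hp : 1 < p)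
    (hN : 1 ≤ N) (hR1 : 0 ≤ R1) (hR12 : R1 < R2) (hf : ContinuousOn f (Ici 0))
    (hpos : ∀ s, 1 < s → 0 < f s) : DecreasingForLargeData p N R1 R2 (fhat f) := by
  obtain ⟨B, hB0, hB⟩ := exists_neg_le_fhat hf hpos
  obtain ⟨M, hM, hle⟩ := h.exists_le_mul_rpow hp.le hf hpos
  exact .of_le_mul_rpow hp hN hR1 hR12 (fun _ => fhat_pos hpos) hB0 hB hM fun s hs =>
    (fhat_of_nonneg (zero_le_one.trans hs)).trans_le (hle s hs)

lemma decreasingForLargeData_fhat {p R1 R2 : ℝ} {N : ℕ} {f : ℝ → ℝ} (hp : 1 < p) (hN : 1 ≤ N)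
    (hR1 : 0 ≤ R1) (hR12 : R1 < R2) (hf : ContinuousOn f (Ici 0)) (hpos : ∀ s, 1 < s → 0 < f s)
    (hball : R1 = 0 → Fsubl p f ∨ SubcriticalGrowth p N f) :
    DecreasingForLargeData p N R1 R2 (fhat f) := by
  rcases hR1.eq_or_lt' with rfl | hR1pos
  · rcases hball rfl with hsubl | hsubc
    · exact hsubl.decreasingForLargeData hp hN le_rfl hR12 hf hpos
    · exact hsubc.decreasingForLargeData hp hN hR12 hf hpos
  · obtain ⟨B, hB0, hB⟩ := exists_neg_le_fhat hf hpos
    exact .of_pos_left hp hN hR1pos hR12 (fun _ => fhat_pos hpos) hB0 hB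

lemma NeumannSol.cauchySol {p R1 R2 : ℝ} {N : ℕ} {f u : ℝ → ℝ} (S : NeumannSol p N R1 R2 f u) :
    CauchySol p N R1 R2 (fhat f) u (u R1) := by
  obtain ⟨hdiff, hcont, hpos, hleft, -, hflux, heq⟩ := S
  refine ⟨hdiff, hcont, rfl, hleft, hflux, fun x hx => ?_⟩
  rw [fhat_of_nonneg (hpos x ⟨hx.1.le, hx.2⟩).le]
  exact heq x hx

theorem stmt19_general {p : ℝ} (hp : 1 < p) {N : ℕ} (hN : 1 ≤ N) {R1 R2 : ℝ} (hR1 : 0 ≤ R1)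
    (hR12 : R1 < R2) {f : ℝ → ℝ} (hf : ContinuousOn f (Ici 0)) (hpos : ∀ s, 1 < s → 0 < f s)
    (hball : R1 = 0 → Fsubl p f ∨ SubcriticalGrowth p N f) :
    ∃ dstar : ℝ, 1 < dstar ∧
      (∀ d : ℝ, dstar ≤ d → ∀ u : ℝ → ℝ, CauchySol p N R1 R2 (fhat f) u d →
        ∀ x ∈ Ioc R1 R2, deriv u x < 0) ∧
      (∀ u : ℝ → ℝ, NeumannSol p N R1 R2 f u → u R1 < dstar) := by
  obtain ⟨D, hD⟩ := eventually_atTop.1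
    ((decreasingForLargeData_fhat hp hN hR1 hR12 hf hpos hball).and (eventually_gt_atTop 1))
  refine ⟨D, (hD D le_rfl).2, fun d hd => (hD d hd).1, fun u S => ?_⟩
  by_contra! hDu
  exact ((hD _ hDu).1 u S.cauchySol R2 ⟨hR12, le_rfl⟩).ne S.2.2.2.2.1

theorem stmt19 (p : ℝ) (hp : 1 < p) (N : ℕ) (hN : 1 ≤ N)
    (R1 R2 : ℝ) (hR1 : 0 ≤ R1) (hR12 : R1 < R2)
    (f : ℝ → ℝ) (hreg : Freg f) (heq : Feq f) (h0 : Fzero p f)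
    (hball : R1 = 0 → Fsubl p f ∨ Fsubc p N f) :
    ∃ dstar : ℝ, 1 < dstar ∧
      (∀ d : ℝ, dstar ≤ d → ∀ u : ℝ → ℝ, CauchySol p N R1 R2 (fhat f) u d →
        ∀ x ∈ Ioc R1 R2, deriv u x < 0) ∧
      (∀ u : ℝ → ℝ, NeumannSol p N R1 R2 f u → u R1 < dstar) :=
  stmt19_general hp hN hR1 hR12 hreg.1 heq.2.2.2 fun h => (hball h).imp_right (·.subcriticalGrowth)
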